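/- For a ternary cubic form f over ℂ, the following are equivalent: (1) the Hessian determinant det(∂ᵢ∂ⱼ f) is the zero polynomial; (2) the three partial derivatives ∂₁f, ∂₂f, ∂₃f are linearly dependent over ℂ; (3) there exists a nonzero vector (z₁,z₂,z₃) ∈ ℂ³ with z₁∂₁f + z₂∂₂f + z₃∂₃f = 0; (4) there exist linear forms a, b and constants g₀, h₀, k₀, i₀ ∈ ℂ such that f = g₀a³ + h₀a²b + k₀ab² + i₀b³; (5) f = a·b·c for some linear forms a, b, c whose coefficient vectors are linearly dependent over ℂ. -/

import Mathlib

open MvPolynomial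

/-- The Hessian determinant `det (∂ᵢ∂ⱼ f)` of a ternary form. -/
noncomputable def hessianDet (f : MvPolynomial (Fin 3) ℂ) : MvPolynomial (Fin 3) ℂ :=
  Matrix.det (Matrix.of fun i j : Fin 3 => pderiv i (pderiv j f))

/-- A linear form is a homogeneous polynomial of degree 1. -/
def IsLinearForm (a : MvPolynomial (Fin 3) ℂ) : Prop := a.IsHomogeneous 1

/-!
Polarizing the cubic form `f` gives a symmetric trilinear form `T` with `T x x x = 6 * f x`, and
the Hessian matrix of `f` at `x` is the Gram matrix of the bilinear form `T x`. A vector `z`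
satisfies `∑ zᵢ ∂ᵢf = 0` exactly when `T z = 0`, and then `T` descends to a binary cubic form, which
is a product of three linear forms over an algebraically closed field.

The substantial implication is that a nonzero such `z` exists when every bilinear form `T x` is
degenerate. Choose `x` with `T x x x ≠ 0` and put `W = ker (T x x)`, a complement of the line
through `x`. If `T x w w = 0` for all `w ∈ W`, then `T` is the sum of the cube of a linear form and
of its restriction to `W`, and the question reduces to dimension two. Otherwise some `w ∈ W` has
`T x w w ≠ 0`, so `T x` has rank two, and any nonzero `z ∈ ker (T x)` works: for all `u`, the
determinant of `T x + t • T u` vanishes identically in `t`, and its coefficients of `t` and `t ^ 2`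
yield `T u z z = 0` and then `T u w z = 0`.
-/

section Trilinear

open Module LinearMap

section CommSemiring

variable {R V : Type*} [CommSemiring R] [AddCommMonoid V] [Module R V]

/-- A trilinear form, curried, that is invariant under all permutations of its three arguments, such
as the polarization of a cubic form. The two transpositions recorded here generate these
permutations. -/
structure IsSymmTrilinear (T : V →ₗ[R] V →ₗ[R] V →ₗ[R] R) : Prop where
  swap_left : ∀ x y w, T x y w = T y x w
  swap_right : ∀ x y w, T x y w = T x w y

/-- The restriction of a trilinear form to a submodule, in all three arguments; it is used to
pass from a ternary cubic form to a binary one. -/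
def trilinearRestrict (T : V →ₗ[R] V →ₗ[R] V →ₗ[R] R) (W : Submodule R V) :
    W →ₗ[R] W →ₗ[R] W →ₗ[R] R :=
  (T.domRestrict₁₂ W W).compr₂ W.dualRestrict

@[simp]
theorem trilinearRestrict_apply (T : V →ₗ[R] V →ₗ[R] V →ₗ[R] R) (W : Submodule R V) (x y w : W) :
    trilinearRestrict T W x y w = T x y w :=
  rfl

namespace IsSymmTrilinear

variable {T : V →ₗ[R] V →ₗ[R] V →ₗ[R] R}

theorem restrict (hT : IsSymmTrilinear T) (W : Submodule R V) :
    IsSymmTrilinear (trilinearRestrict T W) :=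
  ⟨fun x y w ↦ hT.swap_left x y w, fun x y w ↦ hT.swap_right x y w⟩

theorem rotate (hT : IsSymmTrilinear T) (x y w : V) : T x y w = T y w x := by
  rw [hT.swap_left, hT.swap_right]

theorem apply_comm (hT : IsSymmTrilinear T) (x y : V) : T x y = T y x :=
  LinearMap.ext (hT.swap_left x y)

end IsSymmTrilinear

end CommSemiring

namespace IsSymmTrilinear

variable {R V : Type*} [CommRing R] [AddCommMonoid V] [Module R V]
  {T : V →ₗ[R] V →ₗ[R] V →ₗ[R] R}

theorem two_mul_apply (hT : IsSymmTrilinear T) (x y w : V) :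
    2 * T x y w = T x (y + w) (y + w) - T x y y - T x w w := by
  simp only [map_add, LinearMap.add_apply, hT.swap_right x w y]
  ring

theorem six_mul_apply (hT : IsSymmTrilinear T) (x y w : V) :
    6 * T x y w = T (x + y + w) (x + y + w) (x + y + w) - T (x + y) (x + y) (x + y)
      - T (x + w) (x + w) (x + w) - T (y + w) (y + w) (y + w)
      + T x x x + T y y y + T w w w := by
  simp only [map_add, LinearMap.add_apply]
  linear_combination -hT.swap_right x w y - 2 * hT.swap_left y x w + hT.rotate x y w
    - hT.rotate w x y - hT.rotate w y x

end IsSymmTrilinear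

theorem two_ne_zero_of_six_ne_zero {R : Type*} [CommRing R] (h6 : (6 : R) ≠ 0) : (2 : R) ≠ 0 :=
  fun h2 ↦ h6 (by linear_combination 3 * h2)

variable {K V : Type*} [Field K] [AddCommGroup V] [Module K V]
  {T : V →ₗ[K] V →ₗ[K] V →ₗ[K] K} {x z w : V}

theorem eq_zero_of_forall_mem_ker {N : Type*} [AddCommGroup N] [Module K N] {φ : Dual K V}
    {g : V →ₗ[K] N} (hφ : φ x ≠ 0) (hgx : g x = 0) (hg : ∀ w ∈ ker φ, g w = 0) : g = 0 := by
  ext v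
  have hv : v - (φ v / φ x) • x ∈ ker φ := by simp [hφ]
  simpa [hgx] using hg _ hv

theorem finrank_ker_of_apply_ne_zero {n : ℕ} (hV : finrank K V = n + 1)
    {φ : Dual K V} (hφ : φ x ≠ 0) : finrank K (ker φ) = n := by
  have : FiniteDimensional K V := .of_finrank_pos (by omega)
  have := Dual.finrank_ker_add_one_of_ne_zero (f := φ) (by rintro rfl; simp at hφ)
  omega

namespace IsSymmTrilinear

theorem exists_apply_self_ne_zero (hT : IsSymmTrilinear T) (h6 : (6 : K) ≠ 0) (hT0 : T ≠ 0) :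
    ∃ x, T x x x ≠ 0 := by
  contrapose! hT0
  ext x y w
  have : 6 * T x y w = 0 := by simp only [hT.six_mul_apply, hT0]; ring
  simpa [h6] using this

theorem apply_eq_zero_of_forall_apply_self_eq_zero (hT : IsSymmTrilinear T) (h2 : (2 : K) ≠ 0)
    (hx : T x x x ≠ 0) (hxW : ∀ w ∈ ker (T x x), T x w w = 0) (hw : w ∈ ker (T x x)) :
    T x w = 0 := by
  refine eq_zero_of_forall_mem_ker hx ?_ fun u hu ↦ ?_
  · rwa [hT.swap_right]
  · have : 2 * T x w u = 0 := by
      rw [hT.two_mul_apply, hxW _ (add_mem hw hu), hxW w hw, hxW u hu, sub_zero, sub_zero]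
    simpa [h2] using this

theorem apply_eq_zero_of_finrank_eq_two (hT : IsSymmTrilinear T) (hV : finrank K V = 2)
    (hx : T x x x ≠ 0) (hz : z ≠ 0) (hxz : T x z = 0) (hker : ker (T (x + z)) ≠ ⊥) : T z = 0 := by
  have hzx : T z x = 0 := by rw [hT.apply_comm, hxz]
  have hzW : z ∈ ker (T x x) := by simp [hT.swap_right x x z, hxz]
  have span_z : ∀ w ∈ ker (T x x), ∃ c : K, c • z = w := fun w hw ↦ by
    simpa using (finrank_eq_one_iff_of_nonzero' ⟨z, hzW⟩ (by simpa using hz)).1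
      (finrank_ker_of_apply_ne_zero hV hx) ⟨w, hw⟩
  obtain ⟨v, hv, hv0⟩ := Submodule.exists_mem_ne_zero_of_ne_bot hker
  have hvW : v ∈ ker (T x x) := by
    have : T x v x + T z v x = 0 := by simpa using LinearMap.congr_fun (mem_ker.1 hv) x
    simpa [hT.swap_right x v x, hT.swap_right z v x, hzx] using this
  obtain ⟨c, rfl⟩ := span_z v hvW
  have hc : c ≠ 0 := (smul_ne_zero_iff.1 hv0).1
  have hzz : T z z = 0 := by simpa [hxz, hc] using hv
  refine eq_zero_of_forall_mem_ker hx hzx fun w hw ↦ ?_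
  obtain ⟨d, rfl⟩ := span_z w hw
  simp [hzz]

theorem ker_ne_bot_of_finrank_eq_two (hT : IsSymmTrilinear T) (h6 : (6 : K) ≠ 0)
    (hV : finrank K V = 2) (hker : ∀ x, ker (T x) ≠ ⊥) : ker T ≠ ⊥ := by
  intro hbot
  have : Nontrivial V := nontrivial_of_finrank_pos (R := K) (by omega)
  have hT0 : T ≠ 0 := by rintro rfl; simp at hbot
  obtain ⟨x, hx⟩ := hT.exists_apply_self_ne_zero h6 hT0
  obtain ⟨z, hz, hz0⟩ := Submodule.exists_mem_ne_zero_of_ne_bot (hker x)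
  exact hz0 (ker_eq_bot'.1 hbot z (hT.apply_eq_zero_of_finrank_eq_two hV hx hz0 hz (hker _)))

theorem ker_restrict_ne_bot (hT : IsSymmTrilinear T) (hxW : ∀ w ∈ ker (T x x), T x w = 0)
    (y : ker (T x x)) (hker : ker (T (x + y)) ≠ ⊥) :
    ker (trilinearRestrict T (ker (T x x)) y) ≠ ⊥ := by
  obtain ⟨v, hv, hv0⟩ := Submodule.exists_mem_ne_zero_of_ne_bot hker
  have hv (u : V) : T x v u + T y v u = 0 := by simpa using LinearMap.congr_fun (mem_ker.1 hv) u
  have hvW : v ∈ ker (T x x) := by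
    simpa [hT.swap_right x v x, hT.rotate y v x, hT.rotate v x y, hxW y y.2] using hv x
  refine Submodule.ne_bot_iff _ |>.2 ⟨⟨v, hvW⟩, ?_, by simpa using hv0⟩
  ext u
  simpa [hxW v hvW] using hv u

theorem ker_ne_bot_of_ker_restrict_ne_bot (hT : IsSymmTrilinear T) (hx : T x x x ≠ 0)
    (hxW : ∀ w ∈ ker (T x x), T x w = 0) (hker : ker (trilinearRestrict T (ker (T x x))) ≠ ⊥) :
    ker T ≠ ⊥ := by
  obtain ⟨⟨z, hzW⟩, hz, hz0⟩ := Submodule.exists_mem_ne_zero_of_ne_bot hker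
  refine Submodule.ne_bot_iff _ |>.2 ⟨z, ?_, by simpa using hz0⟩
  have hzx : T z x = 0 := by rw [hT.apply_comm, hxW z hzW]
  refine eq_zero_of_forall_mem_ker hx hzx fun w hw ↦ eq_zero_of_forall_mem_ker hx ?_ fun u hu ↦ ?_
  · rw [hT.swap_right, hzx, LinearMap.zero_apply]
  · exact LinearMap.congr_fun₂ (mem_ker.1 hz) ⟨w, hw⟩ ⟨u, hu⟩

end IsSymmTrilinear

theorem linearIndependent_of_orthogonal {B : V →ₗ[K] V →ₗ[K] K} (hx : B x x ≠ 0) (hw : B w w ≠ 0)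
    (hxw : B x w = 0) (hwx : B w x = 0) (hBz : ∀ u, B u z = 0) (hz : z ≠ 0) :
    LinearIndependent K ![x, w, z] := by
  refine Fintype.linearIndependent_iff.2 fun g hg ↦ ?_
  replace hg : g 0 • x + g 1 • w + g 2 • z = 0 := by simpa [Fin.sum_univ_three] using hg
  have hg0 : g 0 = 0 := by simpa [hxw, hBz, hx] using congrArg (B x) hg
  have hg1 : g 1 = 0 := by simpa [hwx, hBz, hw] using congrArg (B w) hg
  have hg2 : g 2 = 0 := by simpa [hg0, hg1, hz] using hg
  intro i
  fin_cases i <;> assumption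

theorem det_gram_eq_zero_of_ker_ne_bot {ι : Type*} [Fintype ι] [DecidableEq ι]
    {B : V →ₗ[K] V →ₗ[K] K} (b : Basis ι K V) (hB : ker B ≠ ⊥) :
    (Matrix.of fun i j ↦ B (b i) (b j)).det = 0 := by
  by_contra hdet
  refine hB (separatingLeft_iff_ker_eq_bot.1 ((separatingLeft_iff_det_ne_zero b).2 ?_))
  convert hdet
  ext i j
  simp [toMatrix₂_apply]

theorem eq_zero_of_det_pencil_eq_zero {c d m p q r s : K} (h6 : (6 : K) ≠ 0) (hc : c ≠ 0)
    (hd : d ≠ 0) (hdet : ∀ t : K, Matrix.det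
      !![c + t * m, t * s, 0; t * s, d + t * r, t * q; 0, t * q, t * p] = 0) :
    p = 0 ∧ q = 0 := by
  simp only [Matrix.det_fin_three, Matrix.of_apply, Matrix.cons_val] at hdet
  -- Finite differences isolate the coefficients of `t` and `t ^ 2` of the determinant.
  have hp : p = 0 := by
    have : 6 * (c * d * p) = 0 := by
      linear_combination 6 * hdet 1 - 2 * hdet (-1) - hdet 2
    simpa [h6, hc, hd] using this
  subst hp
  have : 6 * (c * q ^ 2) = 0 := by linear_combination -3 * hdet 1 - 3 * hdet (-1)
  simpa [h6, hc] using this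

namespace IsSymmTrilinear

theorem apply_eq_zero_of_rank_eq_two (hT : IsSymmTrilinear T) (h6 : (6 : K) ≠ 0)
    (hV : finrank K V = 3) (hker : ∀ x, ker (T x) ≠ ⊥) (hx : T x x x ≠ 0) (hxxw : T x x w = 0)
    (hxww : T x w w ≠ 0) (hz : z ≠ 0) (hxz : T x z = 0) : T z = 0 := by
  have hxwx : T x w x = 0 := by rw [hT.swap_right, hxxw]
  have hxuz (u : V) : T x u z = 0 := by simp [hT.swap_right x u z, hxz]
  let b := basisOfLinearIndependentOfCardEqFinrank
    (linearIndependent_of_orthogonal hx hxww hxxw hxwx hxuz hz) (by simp [hV])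
  have hb : ⇑b = ![x, w, z] := coe_basisOfLinearIndependentOfCardEqFinrank _ _
  have pencil_relations (u : V) : T u z z = 0 ∧ T u w z = 0 := by
    refine eq_zero_of_det_pencil_eq_zero (m := T u x x) (r := T u w w) (s := T u x w) h6 hx hxww
      fun t ↦ ?_
    have hdet := det_gram_eq_zero_of_ker_ne_bot b (hker (x + t • u))
    rw [hb] at hdet
    convert hdet using 2
    ext i j
    fin_cases i <;> fin_cases j <;>
      simp [hxxw, hxwx, hxuz, hxz, hT.swap_right u w x, hT.swap_right u z w, hT.swap_right u z x,
        hT.rotate u x z]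
  refine b.ext fun i ↦ LinearMap.ext fun u ↦ ?_
  rw [hb, ← hT.rotate u z]
  fin_cases i
  · simp [hT.rotate u z x, hT.rotate z x u, hxuz]
  · simp [hT.swap_right u z w, pencil_relations]
  · simp [pencil_relations]

theorem ker_ne_bot_of_finrank_eq_three (hT : IsSymmTrilinear T) (h6 : (6 : K) ≠ 0)
    (hV : finrank K V = 3) (hker : ∀ x, ker (T x) ≠ ⊥) : ker T ≠ ⊥ := by
  have : Nontrivial V := nontrivial_of_finrank_pos (R := K) (by omega)
  by_cases hT0 : T = 0
  · simp [hT0]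
  have h2 := two_ne_zero_of_six_ne_zero h6
  obtain ⟨x, hx⟩ := hT.exists_apply_self_ne_zero h6 hT0
  by_cases! hrank : ∃ w ∈ ker (T x x), T x w w ≠ 0
  · obtain ⟨w, hxxw, hxww⟩ := hrank
    obtain ⟨z, hxz, hz⟩ := Submodule.exists_mem_ne_zero_of_ne_bot (hker x)
    exact Submodule.ne_bot_iff _ |>.2
      ⟨z, hT.apply_eq_zero_of_rank_eq_two h6 hV hker hx hxxw hxww hz hxz, hz⟩
  · have hxW : ∀ w ∈ ker (T x x), T x w = 0 := fun w hw ↦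
      hT.apply_eq_zero_of_forall_apply_self_eq_zero h2 hx hrank hw
    exact hT.ker_ne_bot_of_ker_restrict_ne_bot hx hxW <|
      (hT.restrict _).ker_ne_bot_of_finrank_eq_two h6 (finrank_ker_of_apply_ne_zero hV hx)
        fun y ↦ hT.ker_restrict_ne_bot hxW y (hker _)

theorem exists_basis_apply_self_eq_binary_cubic (hT : IsSymmTrilinear T) (hV : finrank K V = 3)
    (hz : z ≠ 0) (hTz : T z = 0) :
    ∃ (b : Basis (Fin 3) K V) (c₀ c₁ c₂ c₃ : K), ∀ x, T x x x =
      c₀ * b.repr x 0 ^ 3 + c₁ * b.repr x 0 ^ 2 * b.repr x 1 + c₂ * b.repr x 0 * b.repr x 1 ^ 2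
        + c₃ * b.repr x 1 ^ 3 := by
  have hTyz (y : V) : T y z = 0 := by rw [hT.apply_comm, hTz, LinearMap.zero_apply]
  have hTywz (y w : V) : T y w z = 0 := by rw [hT.swap_right, hTyz, LinearMap.zero_apply]
  obtain ⟨v, hv⟩ := exists_linearIndependent_cons_of_lt_finrank
    (LinearIndependent.of_subsingleton (R := K) (v := ![z]) 0 hz) (by omega)
  obtain ⟨u, hu⟩ := exists_linearIndependent_cons_of_lt_finrank hv (by omega)
  let b := basisOfLinearIndependentOfCardEqFinrank hu (by simp [hV])
  have hb : ⇑b = ![u, v, z] := coe_basisOfLinearIndependentOfCardEqFinrank _ _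
  refine ⟨b, T u u u, 3 * T u u v, 3 * T u v v, T v v v, fun x ↦ ?_⟩
  have hx : b.repr x 0 • u + b.repr x 1 • v + b.repr x 2 • z = x := by
    simpa [Fin.sum_univ_three, hb] using b.sum_repr x
  conv_lhs => rw [← hx]
  simp only [map_add, map_smul, LinearMap.add_apply, LinearMap.smul_apply, smul_eq_mul,
    hTz, hTyz, hTywz, LinearMap.zero_apply, hT.swap_left v u, hT.swap_right u v u,
    hT.swap_right v v u]
  ring

end IsSymmTrilinear

end Trilinear

section Polarization

open LinearMap
open scoped Matrix

theorem eq_C_of_isHomogeneous_zero {σ R : Type*} [CommSemiring R] {f : MvPolynomial σ R}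
    (hf : f.IsHomogeneous 0) : f = C (constantCoeff f) :=
  totalDegree_eq_zero_iff_eq_C.1 ((totalDegree_zero_iff_isHomogeneous _).2 hf)

section CommRing

variable {σ R : Type*} [Fintype σ] [CommRing R]

/-- The derivative in the constant direction `v`, as a derivation of the polynomial ring that
depends linearly on `v`. -/
noncomputable def dirDeriv :
    (σ → R) →ₗ[R] Derivation R (MvPolynomial σ R) (MvPolynomial σ R) :=
  Fintype.linearCombination R fun i ↦ pderiv i

theorem dirDeriv_apply (v : σ → R) (f : MvPolynomial σ R) :
    dirDeriv v f = ∑ i, v i • pderiv i f :=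
  map_sum ((Pi.evalAddMonoidHom _ f).comp Derivation.coeFnAddMonoidHom) (fun i ↦ v i • pderiv i) _

theorem dirDeriv_X (v : σ → R) (i : σ) : dirDeriv v (X i) = C (v i) := by
  classical
  simp [dirDeriv_apply, pderiv_X, Pi.single_apply, smul_eq_C_mul]

theorem dirDeriv_comm (v w : σ → R) (f : MvPolynomial σ R) :
    dirDeriv v (dirDeriv w f) = dirDeriv w (dirDeriv v f) := by
  have : ⁅dirDeriv v, dirDeriv w⁆ = 0 :=
    derivation_ext fun i ↦ by simp [Derivation.commutator_apply, dirDeriv_X]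
  simpa [Derivation.commutator_apply, sub_eq_zero] using congrArg (· f) this

theorem isHomogeneous_dirDeriv {f : MvPolynomial σ R} {n : ℕ} (hf : f.IsHomogeneous n)
    (v : σ → R) : (dirDeriv v f).IsHomogeneous (n - 1) := by
  rw [dirDeriv_apply]
  refine IsHomogeneous.sum _ _ _ fun i _ ↦ ?_
  rw [smul_eq_C_mul]
  exact hf.pderiv.C_mul _

theorem eval_dirDeriv_self {f : MvPolynomial σ R} {n : ℕ} (hf : f.IsHomogeneous n) (x : σ → R) :
    eval x (dirDeriv x f) = n * eval x f := by
  simpa [dirDeriv_apply, smul_eval] using congrArg (eval x) hf.sum_X_mul_pderiv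

theorem dirDeriv_eq_C_eval {f : MvPolynomial σ R} (hf : f.IsHomogeneous 1) (v : σ → R) :
    dirDeriv v f = C (eval v f) := by
  have hconst := eq_C_of_isHomogeneous_zero (isHomogeneous_dirDeriv hf v)
  rw [hconst, ← one_mul (eval v f), ← Nat.cast_one, ← eval_dirDeriv_self hf, hconst]
  simp

/-- The polarization of a cubic form `f`: the trilinear form whose values are the third directional
derivatives of `f`, so that `polarForm f x x x = 6 * eval x f`. These derivatives are constant
polynomials, recorded here by their constant coefficients. -/
noncomputable def polarForm (f : MvPolynomial σ R) :
    (σ → R) →ₗ[R] (σ → R) →ₗ[R] (σ → R) →ₗ[R] R where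
  toFun x := LinearMap.mk₂ R (fun y w ↦ constantCoeff (dirDeriv w (dirDeriv y (dirDeriv x f))))
    (by simp) (by simp) (by simp) (by simp)
  map_add' _ _ := by ext; simp
  map_smul' _ _ := by ext; simp

theorem polarForm_apply (f : MvPolynomial σ R) (x y w : σ → R) :
    polarForm f x y w = constantCoeff (dirDeriv w (dirDeriv y (dirDeriv x f))) :=
  rfl

theorem isSymmTrilinear_polarForm (f : MvPolynomial σ R) : IsSymmTrilinear (polarForm f) where
  swap_left x y w := by simp only [polarForm_apply, dirDeriv_comm x y]
  swap_right x y w := by simp only [polarForm_apply, dirDeriv_comm y w]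

variable {f : MvPolynomial σ R}

theorem polarForm_apply_eq_eval (hf : f.IsHomogeneous 3) (x y w : σ → R) :
    polarForm f y w x = eval x (dirDeriv w (dirDeriv y f)) := by
  rw [polarForm_apply,
    dirDeriv_eq_C_eval (isHomogeneous_dirDeriv (isHomogeneous_dirDeriv hf y) w), constantCoeff_C]

theorem polarForm_self_right (hf : f.IsHomogeneous 3) (x y : σ → R) :
    polarForm f y x x = 2 * eval x (dirDeriv y f) := by
  rw [polarForm_apply_eq_eval hf, eval_dirDeriv_self (isHomogeneous_dirDeriv hf y)]
  norm_num

theorem polarForm_self (hf : f.IsHomogeneous 3) (x : σ → R) :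
    polarForm f x x x = 6 * eval x f := by
  rw [polarForm_self_right hf, eval_dirDeriv_self hf]
  norm_num [← mul_assoc]

/-- The Hessian matrix of `f`, consisting of its second partial derivatives. -/
noncomputable def hessian (f : MvPolynomial σ R) : Matrix σ σ (MvPolynomial σ R) :=
  Matrix.of fun i j ↦ pderiv i (pderiv j f)

theorem polarForm_eq_toLinearMap₂' [DecidableEq σ] (hf : f.IsHomogeneous 3) (x : σ → R) :
    polarForm f x = Matrix.toLinearMap₂' R ((hessian f).map (eval x)) := by
  refine LinearMap.ext₂ fun y w ↦ ?_
  have hT := isSymmTrilinear_polarForm f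
  rw [hT.rotate, hT.swap_left, polarForm_apply_eq_eval hf, Matrix.toLinearMap₂'_apply]
  simp only [dirDeriv_apply, map_sum, Derivation.map_smul, smul_eval, hessian, Matrix.map_apply,
    Matrix.of_apply, Finset.mul_sum, smul_eq_mul]
  exact Finset.sum_comm.trans (by simp only [mul_left_comm])

theorem hessian_mulVec_C (f : MvPolynomial σ R) (z : σ → R) :
    hessian f *ᵥ (fun i ↦ C (z i)) = fun i ↦ pderiv i (dirDeriv z f) := by
  funext i
  simp [hessian, Matrix.mulVec, dotProduct, dirDeriv_apply, smul_eq_C_mul, mul_comm]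

theorem det_hessian_eq_zero_of_dirDeriv_eq_zero [DecidableEq σ] [IsDomain R] {z : σ → R}
    (hz : z ≠ 0) (hzf : dirDeriv z f = 0) : (hessian f).det = 0 := by
  refine Matrix.exists_mulVec_eq_zero_iff.1 ⟨fun i ↦ C (z i), fun h ↦ hz ?_, ?_⟩
  · exact funext fun i ↦ by simpa using congrFun h i
  · simp [hessian_mulVec_C, hzf, Pi.zero_def]

theorem not_linearIndependent_pderiv_iff :
    ¬ LinearIndependent R (fun i ↦ pderiv i f) ↔ ∃ z : σ → R, z ≠ 0 ∧ dirDeriv z f = 0 := by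
  simp [Fintype.not_linearIndependent_iff, dirDeriv_apply, Function.ne_iff, and_comm]

end CommRing

variable {σ K : Type*} [Fintype σ] [Field K] {f : MvPolynomial σ K}

theorem ker_polarForm_apply_ne_bot [DecidableEq σ] (hf : f.IsHomogeneous 3)
    (hdet : (hessian f).det = 0) (x : σ → K) : ker (polarForm f x) ≠ ⊥ := by
  have hdetx : ((hessian f).map (eval x)).det = 0 := by
    simpa [hdet] using (RingHom.map_det (eval x) (hessian f)).symm
  rw [polarForm_eq_toLinearMap₂' hf, ne_eq, ← separatingLeft_iff_ker_eq_bot,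
    separatingLeft_toLinearMap₂'_iff_det_ne_zero, not_not, hdetx]

theorem polarForm_apply_eq_zero_iff [Infinite K] (h2 : (2 : K) ≠ 0) (hf : f.IsHomogeneous 3)
    (z : σ → K) : polarForm f z = 0 ↔ dirDeriv z f = 0 := by
  refine ⟨fun h ↦ MvPolynomial.funext fun x ↦ ?_, fun h ↦ ?_⟩
  · have : 2 * eval x (dirDeriv z f) = 0 := by simp [← polarForm_self_right hf, h]
    simpa [h2] using this
  · ext
    simp [polarForm_apply, h]

theorem exists_dirDeriv_eq_zero_of_not_linearIndependent {ℓ : σ → MvPolynomial σ K}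
    (hℓ : ∀ i, (ℓ i).IsHomogeneous 1) (hdep : ¬ LinearIndependent K ℓ) :
    ∃ z : σ → K, z ≠ 0 ∧ ∀ i, dirDeriv z (ℓ i) = 0 := by
  classical
  obtain ⟨g, hg, i, hgi⟩ := Fintype.not_linearIndependent_iff.1 hdep
  let values : (σ → K) →ₗ[K] σ → K :=
    { toFun z i := constantCoeff (dirDeriv z (ℓ i))
      map_add' _ _ := by ext; simp
      map_smul' _ _ := by ext; simp }
  have relation (z : σ → K) : ∑ j, g j * values z j = 0 := by
    simpa [values] using congrArg (fun p ↦ constantCoeff (dirDeriv z p)) hg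
  have not_surjective : ¬ Function.Surjective values := fun hsurj ↦ by
    obtain ⟨z, hz⟩ := hsurj (Pi.single i 1)
    simpa [hz, Pi.single_apply, hgi] using relation z
  rw [← injective_iff_surjective, ← ker_eq_bot] at not_surjective
  obtain ⟨z, hz, hz0⟩ := Submodule.exists_mem_ne_zero_of_ne_bot not_surjective
  refine ⟨z, hz0, fun i ↦ ?_⟩
  rw [eq_C_of_isHomogeneous_zero (isHomogeneous_dirDeriv (hℓ i) z), ← C_0]
  exact congrArg C (congrFun hz i)

theorem exists_dirDeriv_eq_zero_of_det_hessian_eq_zero [Infinite K] {f : MvPolynomial (Fin 3) K}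
    (h6 : (6 : K) ≠ 0) (hf : f.IsHomogeneous 3) (hdet : (hessian f).det = 0) :
    ∃ z : Fin 3 → K, z ≠ 0 ∧ dirDeriv z f = 0 := by
  have h2 := two_ne_zero_of_six_ne_zero h6
  have hker : ker (polarForm f) ≠ ⊥ :=
    (isSymmTrilinear_polarForm f).ker_ne_bot_of_finrank_eq_three h6 (by simp)
      (ker_polarForm_apply_ne_bot hf hdet)
  obtain ⟨z, hz, hz0⟩ := Submodule.exists_mem_ne_zero_of_ne_bot hker
  exact ⟨z, hz0, (polarForm_apply_eq_zero_iff h2 hf z).1 hz⟩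

theorem exists_eq_binary_cubic_of_dirDeriv_eq_zero [Infinite K] {f : MvPolynomial (Fin 3) K}
    (h6 : (6 : K) ≠ 0) (hf : f.IsHomogeneous 3) {z : Fin 3 → K} (hz : z ≠ 0)
    (hzf : dirDeriv z f = 0) :
    ∃ a b : MvPolynomial (Fin 3) K, a.IsHomogeneous 1 ∧ b.IsHomogeneous 1 ∧ ∃ g h k i : K,
      f = C g * a ^ 3 + C h * a ^ 2 * b + C k * a * b ^ 2 + C i * b ^ 3 := by
  have h2 := two_ne_zero_of_six_ne_zero h6
  obtain ⟨e, c₀, c₁, c₂, c₃, hcubic⟩ :=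
    (isSymmTrilinear_polarForm f).exists_basis_apply_self_eq_binary_cubic (by simp) hz
      ((polarForm_apply_eq_zero_iff h2 hf z).2 hzf)
  let coord (i : Fin 3) : MvPolynomial (Fin 3) K :=
    (toMatrix' e.equivFun.toLinearMap).toMvPolynomial i
  have eval_coord (x : Fin 3 → K) (i : Fin 3) : eval x (coord i) = e.repr x i := by
    simp [coord, Matrix.toMvPolynomial_eval_eq_apply, toMatrix'_mulVec]
  refine ⟨coord 0, coord 1, Matrix.toMvPolynomial_isHomogeneous _ 0,
    Matrix.toMvPolynomial_isHomogeneous _ 1, c₀ / 6, c₁ / 6, c₂ / 6, c₃ / 6,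
    MvPolynomial.funext fun x ↦ mul_left_cancel₀ h6 ?_⟩
  rw [← polarForm_self hf, hcubic]
  simp only [map_add, map_mul, map_pow, eval_C, eval_coord]
  field_simp

theorem exists_dirDeriv_mul_eq_zero {a b c : MvPolynomial (Fin 3) K} (ha : a.IsHomogeneous 1)
    (hb : b.IsHomogeneous 1) (hc : c.IsHomogeneous 1) (hdep : ¬ LinearIndependent K ![a, b, c]) :
    ∃ z : Fin 3 → K, z ≠ 0 ∧ dirDeriv z (a * b * c) = 0 := by
  obtain ⟨z, hz, hz0⟩ := exists_dirDeriv_eq_zero_of_not_linearIndependent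
    (by simp [Fin.forall_fin_succ, ha, hb, hc]) hdep
  simp only [Fin.forall_fin_succ, Matrix.cons_val] at hz0
  exact ⟨z, hz, by simp_all [Derivation.leibniz]⟩

end Polarization

section Factorization

theorem not_linearIndependent_of_mem_span_pair {R V : Type*} [Ring R] [StrongRankCondition R]
    [AddCommGroup V] [Module R V] {a b : V} {v : Fin 3 → V}
    (hv : ∀ i, v i ∈ Submodule.span R {a, b}) : ¬ LinearIndependent R v := by
  classical
  intro hli
  have hcard := linearIndependent_le_span' v hli ({a, b} : Finset V) (by
    simpa [Set.range_subset_iff] using hv)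
  have htwo : (3 : Cardinal) ≤ (2 : ℕ) := by
    simpa using hcard.trans (by simpa using Finset.card_le_two)
  norm_num at htwo

variable {K : Type*} [Field K] [IsAlgClosed K]

theorem exists_binary_quadratic_eq_mul {A : Type*} [CommRing A] (φ : K →+* A) (h k i : K)
    (a b : A) :
    ∃ r s t u : K, φ h * a ^ 2 + φ k * a * b + φ i * b ^ 2 =
      (φ r * a + φ s * b) * (φ t * a + φ u * b) := by
  by_cases hh : h = 0
  · exact ⟨0, 1, k, i, by simp only [hh, map_zero, map_one]; ring⟩
  obtain ⟨x, hx⟩ := IsAlgClosed.exists_root (Polynomial.C h * Polynomial.X ^ 2 +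
    Polynomial.C k * Polynomial.X + Polynomial.C i)
    (by simp [Polynomial.degree_quadratic hh])
  replace hx : h * x ^ 2 + k * x + i = 0 := by simpa using hx
  refine ⟨1, -x, h, k + h * x, ?_⟩
  rw [show i = -(h * x ^ 2 + k * x) by linear_combination hx]
  simp only [map_neg, map_add, map_mul, map_pow, map_one]
  ring

theorem exists_binary_cubic_eq_mul {A : Type*} [CommRing A] (φ : K →+* A) (g h k i : K)
    (a b : A) :
    ∃ p q r s t u : K, φ g * a ^ 3 + φ h * a ^ 2 * b + φ k * a * b ^ 2 + φ i * b ^ 3 =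
      (φ p * a + φ q * b) * (φ r * a + φ s * b) * (φ t * a + φ u * b) := by
  by_cases hg : g = 0
  · obtain ⟨r, s, t, u, hfac⟩ := exists_binary_quadratic_eq_mul φ h k i a b
    refine ⟨0, 1, r, s, t, u, ?_⟩
    simp only [hg, map_zero, map_one]
    linear_combination b * hfac
  obtain ⟨x, hx⟩ := IsAlgClosed.exists_root (Polynomial.C g * Polynomial.X ^ 3 +
    Polynomial.C h * Polynomial.X ^ 2 + Polynomial.C k * Polynomial.X + Polynomial.C i)
    (by simp [Polynomial.degree_cubic hg])
  replace hx : g * x ^ 3 + h * x ^ 2 + k * x + i = 0 := by simpa using hx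
  obtain ⟨r, s, t, u, hfac⟩ :=
    exists_binary_quadratic_eq_mul φ g (h + g * x) (k + (h + g * x) * x) a b
  refine ⟨1, -x, r, s, t, u, ?_⟩
  rw [show i = -(g * x ^ 3 + h * x ^ 2 + k * x) by linear_combination hx]
  simp only [map_neg, map_add, map_mul, map_pow, map_one] at hfac ⊢
  linear_combination (a - φ x * b) * hfac

theorem exists_binary_cubic_eq_mul_linearForms {σ : Type*} {a b : MvPolynomial σ K}
    (ha : a.IsHomogeneous 1) (hb : b.IsHomogeneous 1) (g h k i : K) :
    ∃ l m n : MvPolynomial σ K, l.IsHomogeneous 1 ∧ m.IsHomogeneous 1 ∧ n.IsHomogeneous 1 ∧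
      ¬ LinearIndependent K ![l, m, n] ∧
      C g * a ^ 3 + C h * a ^ 2 * b + C k * a * b ^ 2 + C i * b ^ 3 = l * m * n := by
  have hom (p q : K) : (C p * a + C q * b).IsHomogeneous 1 := (ha.C_mul p).add (hb.C_mul q)
  have mem_span (p q : K) : C p * a + C q * b ∈ Submodule.span K {a, b} :=
    Submodule.mem_span_pair.2 ⟨p, q, by simp only [smul_eq_C_mul]⟩
  obtain ⟨p, q, r, s, t, u, hfac⟩ := exists_binary_cubic_eq_mul C g h k i a b
  refine ⟨_, _, _, hom p q, hom r s, hom t u, ?_, hfac⟩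
  exact not_linearIndependent_of_mem_span_pair (a := a) (b := b)
    (by simp [Fin.forall_fin_succ, mem_span])

end Factorization

theorem stmt4_general {K : Type*} [Field K] [IsAlgClosed K] (h6 : (6 : K) ≠ 0)
    (f : MvPolynomial (Fin 3) K) (hf : f.IsHomogeneous 3) :
    [(hessian f).det = 0,
     ¬ LinearIndependent K ![pderiv 0 f, pderiv 1 f, pderiv 2 f],
     ∃ z : Fin 3 → K, z ≠ 0 ∧
       C (z 0) * pderiv 0 f + C (z 1) * pderiv 1 f + C (z 2) * pderiv 2 f = 0,
     ∃ a b : MvPolynomial (Fin 3) K, a.IsHomogeneous 1 ∧ b.IsHomogeneous 1 ∧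
       ∃ g₀ h₀ k₀ i₀ : K,
         f = C g₀ * a ^ 3 + C h₀ * a ^ 2 * b + C k₀ * a * b ^ 2 + C i₀ * b ^ 3,
     ∃ a b c : MvPolynomial (Fin 3) K, a.IsHomogeneous 1 ∧ b.IsHomogeneous 1 ∧
       c.IsHomogeneous 1 ∧ ¬ LinearIndependent K ![a, b, c] ∧ f = a * b * c].TFAE := by
  have gradient_eq : ![pderiv 0 f, pderiv 1 f, pderiv 2 f] = fun i ↦ pderiv i f :=
    FinVec.etaExpand_eq fun i : Fin 3 ↦ pderiv i f
  have dirDeriv_eq (z : Fin 3 → K) :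
      C (z 0) * pderiv 0 f + C (z 1) * pderiv 1 f + C (z 2) * pderiv 2 f = dirDeriv z f := by
    simp only [dirDeriv_apply, Fin.sum_univ_three, smul_eq_C_mul]
  simp only [gradient_eq, dirDeriv_eq]
  tfae_have 1 → 3 := exists_dirDeriv_eq_zero_of_det_hessian_eq_zero h6 hf
  tfae_have 3 → 1 := fun ⟨_, hz, hzf⟩ ↦ det_hessian_eq_zero_of_dirDeriv_eq_zero hz hzf
  tfae_have 2 ↔ 3 := not_linearIndependent_pderiv_iff
  tfae_have 3 → 4 := fun ⟨_, hz, hzf⟩ ↦ exists_eq_binary_cubic_of_dirDeriv_eq_zero h6 hf hz hzf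
  tfae_have 4 → 5 := fun ⟨_, _, ha, hb, g, h, k, i, hfab⟩ ↦
    hfab ▸ exists_binary_cubic_eq_mul_linearForms ha hb g h k i
  tfae_have 5 → 3 := fun ⟨_, _, _, ha, hb, hc, hdep, hfabc⟩ ↦
    hfabc ▸ exists_dirDeriv_mul_eq_zero ha hb hc hdep
  tfae_finish

theorem stmt4 (f : MvPolynomial (Fin 3) ℂ) (hf : f.IsHomogeneous 3) :
    [hessianDet f = 0,
     ¬ LinearIndependent ℂ ![pderiv 0 f, pderiv 1 f, pderiv 2 f],
     ∃ z : Fin 3 → ℂ, z ≠ 0 ∧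
       C (z 0) * pderiv 0 f + C (z 1) * pderiv 1 f + C (z 2) * pderiv 2 f = 0,
     ∃ a b : MvPolynomial (Fin 3) ℂ, IsLinearForm a ∧ IsLinearForm b ∧
       ∃ g₀ h₀ k₀ i₀ : ℂ,
         f = C g₀ * a ^ 3 + C h₀ * a ^ 2 * b + C k₀ * a * b ^ 2 + C i₀ * b ^ 3,
     ∃ a b c : MvPolynomial (Fin 3) ℂ, IsLinearForm a ∧ IsLinearForm b ∧ IsLinearForm c ∧
       ¬ LinearIndependent ℂ ![a, b, c] ∧ f = a * b * c].TFAE :=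
  stmt4_general (by norm_num) f hf
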